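/- Let s ∈ (1/2,1), let Ω ⊂ ℝ^n be a bounded domain and let W be the double well potential. Then for every k ∈ ℕ there exists a constant c_k > 0 such that for every ε ∈ (0,1) and every f ∈ S_ε^k one has F_ε(f) = (ε^{2s−1}/2) ∫_Ω∫_Ω |f(x)−f(y)|²/|x−y|^{n+2s} dx dy + ε^{−1} ∫_Ω W(f) dx ≤ c_k; in particular the bound c_k is independent of ε. -/

import Mathlib

open MeasureTheory Real Set
open scoped ENNReal

noncomputable section

/-- The double well potential: an even nonnegative `C²` function vanishing exactly at `±1`,
positive on `(-1,1)`, with nondegenerate minima at `±1`. -/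
def IsDoubleWell (W : ℝ → ℝ) : Prop :=
  ContDiff ℝ 2 W ∧ (∀ t, W (-t) = W t) ∧ (∀ t, 0 ≤ W t) ∧
  W 1 = 0 ∧ W (-1) = 0 ∧ (∀ t ∈ Set.Ioo (-1 : ℝ) 1, 0 < W t) ∧
  deriv W 1 = 0 ∧ deriv W (-1) = 0 ∧
  0 < iteratedDeriv 2 W 1 ∧ 0 < iteratedDeriv 2 W (-1)

/-- The Gagliardo double integral `∫_Ω ∫_Ω |u(x)-u(y)|² / |x-y|^{n+2s} dx dy`. -/
def gagliardo (n : ℕ) (s : ℝ) (Ω : Set (EuclideanSpace ℝ (Fin n)))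
    (u : EuclideanSpace ℝ (Fin n) → ℝ) : ℝ≥0∞ :=
  ∫⁻ x in Ω, ∫⁻ y in Ω, ENNReal.ofReal (|u x - u y| ^ 2 / dist x y ^ ((n : ℝ) + 2 * s))

/-- The potential term `∫_Ω W(u) dx`. -/
def potentialTerm (n : ℕ) (Ω : Set (EuclideanSpace ℝ (Fin n))) (W : ℝ → ℝ)
    (u : EuclideanSpace ℝ (Fin n) → ℝ) : ℝ≥0∞ :=
  ∫⁻ x in Ω, ENNReal.ofReal (W (u x))

/-- The cosine polynomial `φ_λ(t) = ∑_{m=0}^k λ⁽ᵐ⁾ cos(m t)`. -/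
def cosPoly (k : ℕ) (lam : EuclideanSpace ℝ (Fin (k + 1))) (t : ℝ) : ℝ :=
  ∑ m : Fin (k + 1), lam m * Real.cos ((m : ℕ) * t)

/-- The averaged sign `L_ε(φ_λ)(t) = (1/(2ε)) ∫_{t-ε}^{t+ε} φ_λ(τ)/|φ_λ(τ)| dτ`. -/
def Lavg (k : ℕ) (ε : ℝ) (lam : EuclideanSpace ℝ (Fin (k + 1))) (t : ℝ) : ℝ :=
  (1 / (2 * ε)) * ∫ τ in (t - ε)..(t + ε), cosPoly k lam τ / |cosPoly k lam τ|

/-- The family `S_ε^k = { L_ε(φ_λ) ∘ P₁ : |λ| = 1 }` of functions on `ℝ^n`. -/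
def Sset (n k : ℕ) (hn : 0 < n) (ε : ℝ) : Set (EuclideanSpace ℝ (Fin n) → ℝ) :=
  {f | ∃ lam : EuclideanSpace ℝ (Fin (k + 1)), ‖lam‖ = 1 ∧
    ∀ x, f x = Lavg k ε lam (x ⟨0, hn⟩)}


/-!
The averaged sign `L_ε(φ)` takes values in `[-1, 1]`, is `1/ε`-Lipschitz, and is locally constant
with value `±1` at distance more than `ε` from the zeros of `φ`. As `φ_λ(t)` is a nonzero polynomial
of degree at most `k` in `cos t`, it has at most `N = N(k, R)` zeros in a bounded interval. So every
`f ∈ S_ε^k` consists, on a ball containing `Ω`, of at most `N` transition layers of width `ε` along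
parallel hyperplanes.

The potential is concentrated on slabs of total volume `O(N ε)`. The increment `f (x + h) - f x` is
at most `min 2 (‖h‖ / ε)` and vanishes unless `x` is within `‖h‖ + ε` of one of the hyperplanes, so
the Gagliardo energy is at most a constant times
`N ∫ min 2 (‖h‖ / ε) ^ 2 * ‖h‖ ^ (-n - 2 * s) * (‖h‖ + ε) dh`. The substitution `h = ε h'` shows
that this integral is `ε ^ (1 - 2 * s)` times its value at `ε = 1`, which converges at the origin
because `s < 1` and at infinity because `1 / 2 < s`.
-/

/-! ### Zeros of cosine polynomials -/

section CosineZeros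

open Polynomial

/-- The combination `∑ₘ λ⁽ᵐ⁾ Tₘ` of Chebyshev polynomials of the first kind, i.e. the polynomial
`p` with `φ_λ(t) = p(cos t)`. -/
def chebyshevSum (k : ℕ) (lam : EuclideanSpace ℝ (Fin (k + 1))) : ℝ[X] :=
  ∑ m : Fin (k + 1), lam m • Chebyshev.T ℝ (m : ℕ)

lemma eval_cos_chebyshevSum (k : ℕ) (lam : EuclideanSpace ℝ (Fin (k + 1))) (t : ℝ) :
    (chebyshevSum k lam).eval (cos t) = cosPoly k lam t := by
  simp [chebyshevSum, cosPoly, eval_finsetSum, Chebyshev.T_real_cos]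

lemma natDegree_chebyshevSum_le (k : ℕ) (lam : EuclideanSpace ℝ (Fin (k + 1))) :
    (chebyshevSum k lam).natDegree ≤ k := by
  refine natDegree_sum_le_of_forall_le _ _ fun m _ => (natDegree_smul_le _ _).trans ?_
  simpa using Nat.lt_succ_iff.1 m.2

lemma chebyshevSum_ne_zero (k : ℕ) {lam : EuclideanSpace ℝ (Fin (k + 1))} (hlam : lam ≠ 0) :
    chebyshevSum k lam ≠ 0 := by
  have hT : LinearIndependent ℝ fun m : Fin (k + 1) => Chebyshev.T ℝ (m : ℕ) :=
    (Chebyshev.chebyshevTsequence ℝ).linearIndependent.comp _ Fin.val_injective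
  exact fun h => hlam <| PiLp.ext <| Fintype.linearIndependent_iff.1 hT lam h

lemma injective_floor_div_pi_cos : Function.Injective fun t : ℝ => (⌊t / π⌋, cos t) := by
  refine Function.LeftInverse.injective
    (g := fun q : ℤ × ℝ => q.1 * π + arccos ((-1) ^ q.1 * q.2)) fun t => ?_
  have hlower : (⌊t / π⌋ : ℝ) * π ≤ t := (le_div_iff₀ pi_pos).1 (Int.floor_le _)
  have hupper : t < (⌊t / π⌋ + 1) * π := (div_lt_iff₀ pi_pos).1 (Int.lt_floor_add_one _)
  simp only [← cos_sub_int_mul_pi]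
  rw [arccos_cos (by linarith) (by linarith)]
  ring

lemma exists_finset_zeros_eval_cos {p : ℝ[X]} (hp : p ≠ 0) (a b : ℝ) :
    ∃ Z : Finset ℝ, Z.card ≤ (Finset.Icc ⌊a / π⌋ ⌊b / π⌋).card * p.natDegree ∧
      ∀ t ∈ Icc a b, p.eval (cos t) = 0 → t ∈ Z := by
  classical
  refine ⟨(Finset.Icc ⌊a / π⌋ ⌊b / π⌋ ×ˢ p.roots.toFinset).preimage _
    injective_floor_div_pi_cos.injOn, ?_, fun t ht hzero => ?_⟩
  · calc _ ≤ (Finset.Icc ⌊a / π⌋ ⌊b / π⌋ ×ˢ p.roots.toFinset).card := by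
          rw [Finset.card_preimage]
          exact Finset.card_filter_le _ _
      _ ≤ _ := by
          rw [Finset.card_product]
          gcongr
          exact (Multiset.toFinset_card_le _).trans (card_roots' p)
  · have hfloor : ⌊t / π⌋ ∈ Finset.Icc ⌊a / π⌋ ⌊b / π⌋ := by
      have := pi_pos
      exact Finset.mem_Icc.2
        ⟨Int.floor_mono (by gcongr; exact ht.1), Int.floor_mono (by gcongr; exact ht.2)⟩
    simpa [hp, hzero] using hfloor

lemma exists_card_zeros_cosPoly_le (k : ℕ) (a b : ℝ) :
    ∃ N : ℕ, ∀ lam : EuclideanSpace ℝ (Fin (k + 1)), lam ≠ 0 →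
      ∃ Z : Finset ℝ, Z.card ≤ N ∧ ∀ t ∈ Icc a b, cosPoly k lam t = 0 → t ∈ Z := by
  refine ⟨(Finset.Icc ⌊a / π⌋ ⌊b / π⌋).card * k, fun lam hlam => ?_⟩
  obtain ⟨Z, hcard, hZ⟩ := exists_finset_zeros_eval_cos (chebyshevSum_ne_zero k hlam) a b
  refine ⟨Z, hcard.trans (Nat.mul_le_mul_left _ (natDegree_chebyshevSum_le k lam)), ?_⟩
  simpa only [eval_cos_chebyshevSum] using hZ

end CosineZeros

lemma continuous_cosPoly (k : ℕ) (lam : EuclideanSpace ℝ (Fin (k + 1))) :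
    Continuous (cosPoly k lam) := by
  unfold cosPoly
  fun_prop

/-! ### Averaged signs and transition layers -/

/-- The average `(1/(2ε)) ∫_{t-ε}^{t+ε} φ(τ)/|φ(τ)| dτ` of the sign of `φ` at scale `ε`; the value
of `φ/|φ|` at a zero of `φ` is `0`. -/
def signAverage (ε : ℝ) (φ : ℝ → ℝ) (t : ℝ) : ℝ :=
  (1 / (2 * ε)) * ∫ τ in (t - ε)..(t + ε), φ τ / |φ τ|

/-- A transition profile of width `ε` on the set `I`, with layers at the points of `Z`: it has
values in `[-1, 1]`, is `1/ε`-Lipschitz, and on `I` it leaves the values `±1` only within distance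
`ε` of `Z` and is constant between points that `Z` does not separate up to `ε`. -/
structure IsTransitionLayer (ε : ℝ) (Z I : Set ℝ) (g : ℝ → ℝ) : Prop where
  abs_le_one : ∀ a, |g a| ≤ 1
  abs_sub_le : ∀ a b, |g a - g b| ≤ |a - b| / ε
  exists_near_of_ne : ∀ a ∈ I, ∀ b ∈ I, g a ≠ g b → ∃ z ∈ Z, |a - z| ≤ |a - b| + ε
  exists_near_of_abs_ne_one : ∀ a ∈ I, |g a| ≠ 1 → ∃ z ∈ Z, |a - z| ≤ ε

section SignAverage

variable {φ : ℝ → ℝ} {ε : ℝ}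

lemma norm_div_abs_self_le_one (x : ℝ) : ‖x / |x|‖ ≤ 1 := by
  simpa using div_self_le_one |x|

lemma norm_integral_div_abs_self_le (φ : ℝ → ℝ) (a b : ℝ) :
    ‖∫ τ in a..b, φ τ / |φ τ|‖ ≤ |b - a| := by
  simpa using intervalIntegral.norm_integral_le_of_norm_le_const (C := 1) (a := a) (b := b)
    fun τ _ => norm_div_abs_self_le_one (φ τ)

lemma intervalIntegrable_div_abs_self (hφ : Measurable φ) (a b : ℝ) :
    IntervalIntegrable (fun τ => φ τ / |φ τ|) volume a b :=
  intervalIntegrable_const.mono_fun (hφ.div hφ.abs).aestronglyMeasurable <| .of_forall fun τ =>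
    (norm_div_abs_self_le_one (φ τ)).trans_eq (norm_one (α := ℝ)).symm

lemma abs_signAverage_le_one (hε : 0 < ε) (φ : ℝ → ℝ) (t : ℝ) : |signAverage ε φ t| ≤ 1 := by
  have h := norm_integral_div_abs_self_le φ (t - ε) (t + ε)
  rw [Real.norm_eq_abs, show t + ε - (t - ε) = 2 * ε by ring] at h
  rw [signAverage, abs_mul, abs_one_div, one_div, inv_mul_le_one₀ (by positivity)]
  exact h

lemma abs_signAverage_sub_le (hφ : Measurable φ) (hε : 0 < ε) (a b : ℝ) :
    |signAverage ε φ a - signAverage ε φ b| ≤ |a - b| / ε := by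
  have hint := intervalIntegrable_div_abs_self hφ
  have hleft := norm_integral_div_abs_self_le φ (a - ε) (b - ε)
  have hright := norm_integral_div_abs_self_le φ (a + ε) (b + ε)
  rw [sub_sub_sub_cancel_right, abs_sub_comm] at hleft
  rw [add_sub_add_right_eq_sub, abs_sub_comm] at hright
  rw [signAverage, signAverage, ← mul_sub, intervalIntegral.integral_interval_sub_interval_comm
    (hint _ _) (hint _ _) (hint _ _), abs_mul, abs_of_pos (by positivity)]
  calc _ ≤ 1 / (2 * ε) * (|a - b| + |a - b|) := by
        gcongr
        exact (abs_sub _ _).trans (add_le_add hleft hright)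
    _ = |a - b| / ε := by field

lemma signAverage_eq_of_div_abs_self_eq (hε : 0 < ε) {t σ : ℝ}
    (hσ : ∀ τ ∈ Icc (t - ε) (t + ε), φ τ / |φ τ| = σ) : signAverage ε φ t = σ := by
  have hcongr : ∫ τ in (t - ε)..(t + ε), φ τ / |φ τ| = ∫ _ in (t - ε)..(t + ε), σ := by
    refine intervalIntegral.integral_congr fun τ hτ => hσ τ ?_
    rwa [uIcc_of_le (by linarith)] at hτ
  rw [signAverage, hcongr, intervalIntegral.integral_const, smul_eq_mul]
  field

lemma signAverage_eq_one_or_eq_neg_one_of_ne_zero (hε : 0 < ε) {c d : ℝ}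
    (hφ : ContinuousOn φ (Icc (c - ε) (d + ε))) (hne : ∀ τ ∈ Icc (c - ε) (d + ε), φ τ ≠ 0) :
    (∀ t ∈ Icc c d, signAverage ε φ t = 1) ∨ (∀ t ∈ Icc c d, signAverage ε φ t = -1) := by
  have hsub {t : ℝ} (ht : t ∈ Icc c d) : Icc (t - ε) (t + ε) ⊆ Icc (c - ε) (d + ε) :=
    Icc_subset_Icc (by linarith [ht.1]) (by linarith [ht.2])
  rcases isPreconnected_Icc.eq_or_eq_neg_of_sq_eq hφ hφ.abs (fun τ _ => (sq_abs (φ τ)).symm)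
    fun hτ => abs_ne_zero.2 (hne _ hτ) with hpos | hneg
  · refine .inl fun t ht => signAverage_eq_of_div_abs_self_eq hε fun τ hτ => ?_
    have habs : |φ τ| = φ τ := (hpos (hsub ht hτ)).symm
    rw [habs, div_self (hne τ (hsub ht hτ))]
  · refine .inr fun t ht => signAverage_eq_of_div_abs_self_eq hε fun τ hτ => ?_
    have habs : |φ τ| = -φ τ := (neg_eq_iff_eq_neg.2 (hneg (hsub ht hτ))).symm
    rw [habs, div_neg, div_self (hne τ (hsub ht hτ))]

lemma exists_zero_of_signAverage_ne (hφ : Continuous φ) (hε : 0 < ε) {a b : ℝ}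
    (hab : signAverage ε φ a ≠ signAverage ε φ b) :
    ∃ z ∈ Icc (min a b - ε) (max a b + ε), φ z = 0 := by
  by_contra! hne
  have ha : a ∈ Icc (min a b) (max a b) := ⟨min_le_left _ _, le_max_left _ _⟩
  have hb : b ∈ Icc (min a b) (max a b) := ⟨min_le_right _ _, le_max_right _ _⟩
  rcases signAverage_eq_one_or_eq_neg_one_of_ne_zero hε hφ.continuousOn hne with h | h <;>
    exact hab ((h a ha).trans (h b hb).symm)

lemma exists_zero_of_abs_signAverage_ne_one (hφ : Continuous φ) (hε : 0 < ε) {a : ℝ}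
    (ha : |signAverage ε φ a| ≠ 1) : ∃ z ∈ Icc (a - ε) (a + ε), φ z = 0 := by
  by_contra! hne
  rcases signAverage_eq_one_or_eq_neg_one_of_ne_zero hε hφ.continuousOn hne with h | h <;>
    simp [h a ⟨le_rfl, le_rfl⟩] at ha

lemma isTransitionLayer_signAverage (hφ : Continuous φ) (hε : 0 < ε) {c d : ℝ} {Z : Set ℝ}
    (hZ : ∀ t ∈ Icc (c - ε) (d + ε), φ t = 0 → t ∈ Z) :
    IsTransitionLayer ε Z (Icc c d) (signAverage ε φ) where
  abs_le_one := abs_signAverage_le_one hε φ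
  abs_sub_le := abs_signAverage_sub_le hφ.measurable hε
  exists_near_of_ne a ha b hb hab := by
    obtain ⟨z, hz, hzero⟩ := exists_zero_of_signAverage_ne hφ hε hab
    refine ⟨z, hZ z ⟨?_, ?_⟩ hzero, ?_⟩
    · linarith [hz.1, le_min ha.1 hb.1]
    · linarith [hz.2, max_le ha.2 hb.2]
    · have hlower : a - |a - b| ≤ min a b := le_min (by simp) (by linarith [le_abs_self (a - b)])
      have hupper : max a b ≤ a + |a - b| := max_le (by simp) (by linarith [neg_le_abs (a - b)])
      exact abs_le.2 ⟨by linarith [hz.2], by linarith [hz.1]⟩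
  exists_near_of_abs_ne_one a ha ha1 := by
    obtain ⟨z, hz, hzero⟩ := exists_zero_of_abs_signAverage_ne_one hφ hε ha1
    exact ⟨z, hZ z ⟨by linarith [hz.1, ha.1], by linarith [hz.2, ha.2]⟩ hzero,
      abs_le.2 ⟨by linarith [hz.2], by linarith [hz.1]⟩⟩

end SignAverage

/-! ### The radial kernel of a transition layer -/

/-- The bound `min 2 (r / ε) ^ 2 / r ^ p` for the Gagliardo integrand with exponent `p` of a
transition profile of width `ε` at two points at distance `r`. -/
def layerKernel (p ε r : ℝ) : ℝ := min 2 (r / ε) ^ 2 / r ^ p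

lemma measurable_layerKernel (p ε : ℝ) : Measurable (layerKernel p ε) := by
  unfold layerKernel
  fun_prop

lemma layerKernel_nonneg (p ε : ℝ) {r : ℝ} (hr : 0 ≤ r) : 0 ≤ layerKernel p ε r := by
  unfold layerKernel
  positivity

lemma layerKernel_mul (p : ℝ) {ε r : ℝ} (hε : 0 < ε) (hr : 0 ≤ r) :
    layerKernel p ε (ε * r) = ε ^ (-p) * layerKernel p 1 r := by
  rw [layerKernel, layerKernel, mul_rpow hε.le hr, mul_div_cancel_left₀ r hε.ne', div_one,
    rpow_neg hε.le]
  ring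

lemma pow_mul_layerKernel_le_of_le_one {d : ℕ} (hd : 0 < d) (p : ℝ) {r : ℝ} (hr : 0 < r)
    (hr1 : r ≤ 1) :
    r ^ (d - 1) * (layerKernel p 1 r * (r + 1)) ≤ 2 * r ^ (d + 1 - p) := by
  calc r ^ (d - 1) * (layerKernel p 1 r * (r + 1))
      ≤ r ^ (d - 1) * (r ^ 2 / r ^ p * (1 + 1)) := by
        unfold layerKernel
        gcongr
        simp
    _ = 2 * r ^ (d + 1 - p) := by
        rw [rpow_sub hr, rpow_add_one hr.ne', rpow_natCast, ← pow_sub_one_mul hd.ne']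
        ring

lemma pow_mul_layerKernel_le_of_one_le {d : ℕ} (hd : 0 < d) (p : ℝ) {r : ℝ} (hr : 1 ≤ r) :
    r ^ (d - 1) * (layerKernel p 1 r * (r + 1)) ≤ 8 * r ^ (d - p) := by
  have hr0 : 0 < r := one_pos.trans_le hr
  calc r ^ (d - 1) * (layerKernel p 1 r * (r + 1))
      ≤ r ^ (d - 1) * (2 ^ 2 / r ^ p * (r + r)) := by
        unfold layerKernel
        gcongr
        exact min_le_left _ _
    _ = 8 * r ^ (d - p) := by
        rw [rpow_sub hr0, rpow_natCast, ← pow_sub_one_mul hd.ne']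
        ring

lemma integrableOn_pow_mul_layerKernel {d : ℕ} (hd : 0 < d) {p : ℝ}
    (hp : p ∈ Ioo (d + 1 : ℝ) (d + 2)) :
    IntegrableOn (fun r => r ^ (d - 1) * (layerKernel p 1 r * (r + 1))) (Ioi 0) := by
  have hmeas : Measurable fun r => r ^ (d - 1) * (layerKernel p 1 r * (r + 1)) := by
    have := measurable_layerKernel p 1
    fun_prop
  have hnorm {r : ℝ} (hr : 0 < r) : ‖r ^ (d - 1) * (layerKernel p 1 r * (r + 1))‖
      = r ^ (d - 1) * (layerKernel p 1 r * (r + 1)) := by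
    have := layerKernel_nonneg p 1 hr.le
    exact norm_of_nonneg (by positivity)
  have hnear : IntegrableOn (fun r : ℝ => 2 * r ^ (d + 1 - p)) (Ioc 0 1) :=
    ((intervalIntegrable_iff_integrableOn_Ioc_of_le zero_le_one).1
      (intervalIntegral.intervalIntegrable_rpow' (by linarith [hp.2]))).const_mul _
  have hfar : IntegrableOn (fun r : ℝ => 8 * r ^ (d - p)) (Ioi 1) :=
    (integrableOn_Ioi_rpow_of_lt (by linarith [hp.1]) one_pos).const_mul _
  rw [← Ioc_union_Ioi_eq_Ioi zero_le_one]
  refine IntegrableOn.union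
    (hnear.mono' hmeas.aestronglyMeasurable <| ae_restrict_of_forall_mem measurableSet_Ioc ?_)
    (hfar.mono' hmeas.aestronglyMeasurable <| ae_restrict_of_forall_mem measurableSet_Ioi ?_)
  · intro r hr
    exact (hnorm hr.1).trans_le (pow_mul_layerKernel_le_of_le_one hd p hr.1 hr.2)
  · intro r hr
    exact (hnorm (one_pos.trans hr)).trans_le
      (pow_mul_layerKernel_le_of_one_le hd p (mem_Ioi.1 hr).le)

section LayerMass

variable {E : Type*} [NormedAddCommGroup E] [NormedSpace ℝ E] [MeasurableSpace E] (μ : Measure E)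

/-- The integral of the layer kernel over all displacements `h`, weighted by the thickness
`‖h‖ + ε` of the slab of points whose displacement by `h` meets a layer of width `ε`. -/
def layerMass (p ε : ℝ) : ℝ≥0∞ :=
  ∫⁻ h, ENNReal.ofReal (layerKernel p ε ‖h‖ * (‖h‖ + ε)) ∂μ

variable [BorelSpace E] [FiniteDimensional ℝ E] [μ.IsAddHaarMeasure]

lemma layerMass_one_ne_top [Nontrivial E] {p : ℝ}
    (hp : p ∈ Ioo (Module.finrank ℝ E + 1 : ℝ) (Module.finrank ℝ E + 2)) :
    layerMass μ p 1 ≠ ∞ :=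
  ((integrable_fun_norm_addHaar μ).2
    (integrableOn_pow_mul_layerKernel Module.finrank_pos hp)).lintegral_lt_top.ne

lemma layerMass_eq_rpow_mul (p : ℝ) {ε : ℝ} (hε : 0 < ε) :
    layerMass μ p ε = ENNReal.ofReal (ε ^ (Module.finrank ℝ E + 1 - p)) * layerMass μ p 1 := by
  set d := Module.finrank ℝ E
  have hscale (h : E) : layerKernel p ε ‖ε • h‖ * (‖ε • h‖ + ε)
      = ε ^ (1 - p) * (layerKernel p 1 ‖h‖ * (‖h‖ + 1)) := by
    rw [norm_smul_of_nonneg hε.le, layerKernel_mul p hε (norm_nonneg h), sub_eq_add_neg,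
      rpow_add hε, rpow_one]
    ring
  have hmeas : Measurable fun h : E => ENNReal.ofReal (layerKernel p ε ‖h‖ * (‖h‖ + ε)) := by
    have := measurable_layerKernel p ε
    fun_prop
  have hsubst : ENNReal.ofReal (ε ^ d)⁻¹ * layerMass μ p ε
      = ENNReal.ofReal (ε ^ (1 - p)) * layerMass μ p 1 := by
    calc _ = ∫⁻ h, ENNReal.ofReal (layerKernel p ε ‖h‖ * (‖h‖ + ε)) ∂μ.map (ε • ·) := by
          rw [Measure.map_addHaar_smul μ hε.ne', lintegral_smul_measure, abs_of_pos (by positivity),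
            smul_eq_mul, layerMass]
      _ = ∫⁻ h, ENNReal.ofReal (ε ^ (1 - p)) *
            ENNReal.ofReal (layerKernel p 1 ‖h‖ * (‖h‖ + 1)) ∂μ := by
          rw [lintegral_map hmeas (measurable_const_smul ε)]
          simp only [hscale, ENNReal.ofReal_mul (rpow_nonneg hε.le _)]
      _ = _ := lintegral_const_mul' _ _ ENNReal.ofReal_ne_top
  calc layerMass μ p ε
      = ENNReal.ofReal (ε ^ d) * (ENNReal.ofReal (ε ^ d)⁻¹ * layerMass μ p ε) := by
        rw [← mul_assoc, ← ENNReal.ofReal_mul (by positivity), mul_inv_cancel₀ (by positivity),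
          ENNReal.ofReal_one, one_mul]
    _ = _ := by
        rw [hsubst, ← mul_assoc, ← ENNReal.ofReal_mul (by positivity), ← rpow_natCast,
          ← rpow_add hε, add_sub_assoc]

end LayerMass

/-! ### Energies of transition layers -/

lemma measurableSet_exists_abs_sub_le {α : Type*} [MeasurableSpace α] {f δ : α → ℝ}
    (hf : Measurable f) (hδ : Measurable δ) (Z : Finset ℝ) :
    MeasurableSet {a | ∃ z ∈ Z, |f a - z| ≤ δ a} := by
  have heq : {a | ∃ z ∈ Z, |f a - z| ≤ δ a} = ⋃ z ∈ Z, {a | |f a - z| ≤ δ a} := by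
    ext
    simp
  rw [heq]
  exact Z.measurableSet_biUnion fun z _ => measurableSet_le (by fun_prop) hδ

section Energy

variable {n : ℕ}

/-- The union of the slabs of half-width `δ` around the hyperplanes `x i = z`, `z ∈ Z`. -/
def slabs (i : Fin n) (Z : Finset ℝ) (δ : ℝ) : Set (EuclideanSpace ℝ (Fin n)) :=
  {x | ∃ z ∈ Z, |x i - z| ≤ δ}

lemma measurableSet_slabs (i : Fin n) (Z : Finset ℝ) (δ : ℝ) : MeasurableSet (slabs i Z δ) :=
  measurableSet_exists_abs_sub_le (by fun_prop) measurable_const Z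

lemma apply_mem_Icc_of_mem_closedBall {R : ℝ} {x : EuclideanSpace ℝ (Fin n)}
    (hx : x ∈ Metric.closedBall 0 R) (i : Fin n) : x i ∈ Icc (-R) R :=
  abs_le.1 <| (PiLp.norm_apply_le x i).trans (mem_closedBall_zero_iff.1 hx)

lemma volume_closedBall_inter_slab_le (i : Fin n) (R z δ : ℝ) :
    volume (Metric.closedBall (0 : EuclideanSpace ℝ (Fin n)) R ∩ {x | |x i - z| ≤ δ})
      ≤ ENNReal.ofReal (2 * R) ^ (n - 1) * ENNReal.ofReal (2 * δ) := by
  let side : Fin n → Set ℝ := Function.update (fun _ => Icc (-R) R) i (Icc (z - δ) (z + δ))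
  have hside_self : side i = Icc (z - δ) (z + δ) := Function.update_self ..
  have hside_ne {j : Fin n} (hj : j ≠ i) : side j = Icc (-R) R := Function.update_of_ne hj ..
  have hbox : Metric.closedBall (0 : EuclideanSpace ℝ (Fin n)) R ∩ {x | |x i - z| ≤ δ}
      ⊆ WithLp.ofLp ⁻¹' univ.pi side := by
    rintro x ⟨hx, hxz⟩ j -
    rcases eq_or_ne j i with rfl | hj
    · rw [hside_self, ← Real.closedBall_eq_Icc]
      exact hxz
    · rw [hside_ne hj]
      exact apply_mem_Icc_of_mem_closedBall hx j
  calc _ ≤ volume (WithLp.ofLp ⁻¹' univ.pi side : Set (EuclideanSpace ℝ (Fin n))) :=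
        measure_mono hbox
    _ = ∏ j, volume (side j) := by
        rw [(PiLp.volume_preserving_ofLp (Fin n)).measure_preimage_emb
          (MeasurableEquiv.toLp 2 (Fin n → ℝ)).symm.measurableEmbedding, volume_pi_pi]
    _ = (∏ _ ∈ Finset.univ.erase i, volume (Icc (-R) R)) * volume (Icc (z - δ) (z + δ)) := by
        rw [← Finset.prod_erase_mul _ _ (Finset.mem_univ i), hside_self]
        congr 1
        exact Finset.prod_congr rfl fun j hj => by rw [hside_ne (Finset.ne_of_mem_erase hj)]
    _ = _ := by
        rw [Finset.prod_const, Finset.card_erase_of_mem (Finset.mem_univ i), Finset.card_fin,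
          Real.volume_Icc, Real.volume_Icc]
        ring_nf

lemma volume_closedBall_inter_slabs_le (i : Fin n) (R : ℝ) (Z : Finset ℝ) (δ : ℝ) :
    volume (Metric.closedBall (0 : EuclideanSpace ℝ (Fin n)) R ∩ slabs i Z δ)
      ≤ Z.card * (ENNReal.ofReal (2 * R) ^ (n - 1) * ENNReal.ofReal (2 * δ)) := by
  have hunion : Metric.closedBall (0 : EuclideanSpace ℝ (Fin n)) R ∩ slabs i Z δ
      = ⋃ z ∈ Z, Metric.closedBall 0 R ∩ {x | |x i - z| ≤ δ} := by
    ext x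
    simp [slabs]
  rw [hunion, ← nsmul_eq_mul]
  exact (measure_biUnion_finset_le _ _).trans <|
    Finset.sum_le_card_nsmul _ _ _ fun z _ => volume_closedBall_inter_slab_le i R z δ

lemma lintegral_lintegral_indicator_slabs_le (i : Fin n) (R : ℝ) (Z : Finset ℝ)
    {κ : EuclideanSpace ℝ (Fin n) → ℝ≥0∞} (hκ : Measurable κ)
    {δ : EuclideanSpace ℝ (Fin n) → ℝ} (hδ : Measurable δ) :
    ∫⁻ x in Metric.closedBall 0 R, ∫⁻ y, (slabs i Z (δ (y - x))).indicator (fun _ => κ (y - x)) x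
      ≤ ∫⁻ h, κ h * (Z.card * (ENNReal.ofReal (2 * R) ^ (n - 1) * ENNReal.ofReal (2 * δ h))) := by
  let G (x h : EuclideanSpace ℝ (Fin n)) : ℝ≥0∞ := (slabs i Z (δ h)).indicator (fun _ => κ h) x
  have hG : Measurable (Function.uncurry G) :=
    (hκ.comp measurable_snd).indicator <| measurableSet_exists_abs_sub_le
      (f := fun q : EuclideanSpace ℝ (Fin n) × EuclideanSpace ℝ (Fin n) => q.1 i)
      (by fun_prop) (hδ.comp measurable_snd) Z
  calc ∫⁻ x in Metric.closedBall 0 R, ∫⁻ y, G x (y - x)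
      = ∫⁻ x in Metric.closedBall 0 R, ∫⁻ h, G x h :=
        lintegral_congr fun x => lintegral_sub_right_eq_self (G x) x
    _ = ∫⁻ h, ∫⁻ x in Metric.closedBall 0 R, G x h := lintegral_lintegral_swap hG.aemeasurable
    _ ≤ _ := lintegral_mono fun h => by
        rw [lintegral_indicator_const (measurableSet_slabs i Z (δ h)),
          Measure.restrict_apply (measurableSet_slabs i Z (δ h)), inter_comm]
        gcongr
        exact volume_closedBall_inter_slabs_le i R Z (δ h)

lemma gagliardo_mono (s : ℝ) {Ω Ω' : Set (EuclideanSpace ℝ (Fin n))} (h : Ω ⊆ Ω')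
    (u : EuclideanSpace ℝ (Fin n) → ℝ) : gagliardo n s Ω u ≤ gagliardo n s Ω' u :=
  (lintegral_mono fun _ => lintegral_mono_set h).trans (lintegral_mono_set h)

lemma potentialTerm_mono {Ω Ω' : Set (EuclideanSpace ℝ (Fin n))} (h : Ω ⊆ Ω') (W : ℝ → ℝ)
    (u : EuclideanSpace ℝ (Fin n) → ℝ) : potentialTerm n Ω W u ≤ potentialTerm n Ω' W u :=
  lintegral_mono_set h

variable {R ε : ℝ} {Z : Finset ℝ} {g : ℝ → ℝ}

lemma IsTransitionLayer.ofReal_sq_div_le (hg : IsTransitionLayer ε Z (Icc (-R) R) g) (hε : 0 < ε)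
    (i : Fin n) (p : ℝ) {x y : EuclideanSpace ℝ (Fin n)} (hx : x ∈ Metric.closedBall 0 R)
    (hy : y ∈ Metric.closedBall 0 R) :
    ENNReal.ofReal (|g (x i) - g (y i)| ^ 2 / dist x y ^ p)
      ≤ (slabs i Z (‖y - x‖ + ε)).indicator
          (fun _ => ENNReal.ofReal (layerKernel p ε ‖y - x‖)) x := by
  by_cases hxy : g (x i) = g (y i)
  · simp [hxy]
  have hcoord : |x i - y i| ≤ ‖y - x‖ := by
    simpa [norm_sub_rev] using PiLp.norm_apply_le (x - y) i
  have hslab : x ∈ slabs i Z (‖y - x‖ + ε) := by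
    obtain ⟨z, hz, hxz⟩ := hg.exists_near_of_ne _ (apply_mem_Icc_of_mem_closedBall hx i) _
      (apply_mem_Icc_of_mem_closedBall hy i) hxy
    exact ⟨z, hz, by linarith⟩
  have hincrement : |g (x i) - g (y i)| ≤ min 2 (‖y - x‖ / ε) := by
    refine le_min ((abs_sub _ _).trans ?_) ((hg.abs_sub_le _ _).trans (by gcongr))
    linarith [hg.abs_le_one (x i), hg.abs_le_one (y i)]
  rw [indicator_of_mem hslab, layerKernel, dist_comm, dist_eq_norm]
  gcongr

lemma IsTransitionLayer.gagliardo_le (hg : IsTransitionLayer ε Z (Icc (-R) R) g) (hε : 0 < ε)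
    (i : Fin n) (s : ℝ) :
    gagliardo n s (Metric.closedBall 0 R) (fun x => g (x i))
      ≤ Z.card * (ENNReal.ofReal (2 * R) ^ (n - 1) *
          (2 * layerMass (volume : Measure (EuclideanSpace ℝ (Fin n))) (n + 2 * s) ε)) := by
  set p : ℝ := n + 2 * s
  set V := ENNReal.ofReal (2 * R) ^ (n - 1)
  have hκ : Measurable fun h : EuclideanSpace ℝ (Fin n) =>
      ENNReal.ofReal (layerKernel p ε ‖h‖) := by
    have := measurable_layerKernel p ε
    fun_prop
  have hconst : Z.card * (V * 2) ≠ ∞ := by finiteness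
  calc _ ≤ ∫⁻ x in Metric.closedBall 0 R, ∫⁻ y, (slabs i Z (‖y - x‖ + ε)).indicator
          (fun _ => ENNReal.ofReal (layerKernel p ε ‖y - x‖)) x :=
        setLIntegral_mono' measurableSet_closedBall fun x hx =>
          (setLIntegral_mono' measurableSet_closedBall fun y hy =>
            hg.ofReal_sq_div_le hε i p hx hy).trans (setLIntegral_le_lintegral _ _)
    _ ≤ ∫⁻ h : EuclideanSpace ℝ (Fin n), ENNReal.ofReal (layerKernel p ε ‖h‖) *
          (Z.card * (V * ENNReal.ofReal (2 * (‖h‖ + ε)))) :=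
        lintegral_lintegral_indicator_slabs_le i R Z hκ (by fun_prop)
    _ = ∫⁻ h : EuclideanSpace ℝ (Fin n), Z.card * (V * 2) *
          ENNReal.ofReal (layerKernel p ε ‖h‖ * (‖h‖ + ε)) := by
        refine lintegral_congr fun h => ?_
        rw [ENNReal.ofReal_mul zero_le_two, ENNReal.ofReal_ofNat,
          ENNReal.ofReal_mul (layerKernel_nonneg p ε (norm_nonneg h))]
        ring
    _ = _ := by
        rw [lintegral_const_mul' _ _ hconst, layerMass]
        ring

lemma IsTransitionLayer.potentialTerm_le (hg : IsTransitionLayer ε Z (Icc (-R) R) g) (i : Fin n)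
    {W : ℝ → ℝ} (hW1 : W 1 = 0) (hW2 : W (-1) = 0) {M : ℝ} (hM : ∀ v ∈ Icc (-1) 1, W v ≤ M) :
    potentialTerm n (Metric.closedBall 0 R) W (fun x => g (x i))
      ≤ Z.card * (ENNReal.ofReal (2 * R) ^ (n - 1) * ENNReal.ofReal (2 * ε)) *
          ENNReal.ofReal M := by
  calc _ ≤ ∫⁻ x in Metric.closedBall 0 R,
          (slabs i Z ε).indicator (fun _ => ENNReal.ofReal M) x := by
        refine setLIntegral_mono' measurableSet_closedBall fun x hx => ?_
        by_cases hgx : |g (x i)| = 1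
        · rcases eq_or_eq_neg_of_abs_eq hgx with h | h <;> simp [h, hW1, hW2]
        · have hslab : x ∈ slabs i Z ε :=
            hg.exists_near_of_abs_ne_one _ (apply_mem_Icc_of_mem_closedBall hx i) hgx
          rw [indicator_of_mem hslab]
          exact ENNReal.ofReal_le_ofReal (hM _ (abs_le.1 (hg.abs_le_one _)))
    _ = ENNReal.ofReal M * volume (Metric.closedBall 0 R ∩ slabs i Z ε) := by
        rw [lintegral_indicator_const (measurableSet_slabs i Z ε),
          Measure.restrict_apply (measurableSet_slabs i Z ε), inter_comm]
    _ ≤ _ := by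
        rw [mul_comm]
        gcongr
        exact volume_closedBall_inter_slabs_le i R Z ε

lemma IsTransitionLayer.energy_le (hg : IsTransitionLayer ε Z (Icc (-R) R) g) (hε : 0 < ε)
    (i : Fin n) (s : ℝ) {W : ℝ → ℝ} (hW1 : W 1 = 0) (hW2 : W (-1) = 0) {M : ℝ}
    (hM : ∀ v ∈ Icc (-1) 1, W v ≤ M) :
    ENNReal.ofReal (ε ^ (2 * s - 1) / 2) *
          gagliardo n s (Metric.closedBall 0 R) (fun x => g (x i))
        + ENNReal.ofReal (1 / ε) *
          potentialTerm n (Metric.closedBall 0 R) W (fun x => g (x i))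
      ≤ Z.card * (ENNReal.ofReal (2 * R) ^ (n - 1) *
          (layerMass (volume : Measure (EuclideanSpace ℝ (Fin n))) (n + 2 * s) 1
            + 2 * ENNReal.ofReal M)) := by
  have hmass := layerMass_eq_rpow_mul (volume : Measure (EuclideanSpace ℝ (Fin n))) (n + 2 * s) hε
  rw [finrank_euclideanSpace_fin, show (n + 1 - (n + 2 * s) : ℝ) = 1 - 2 * s by ring] at hmass
  have hgagliardo : ENNReal.ofReal (ε ^ (2 * s - 1) / 2) *
      (2 * ENNReal.ofReal (ε ^ (1 - 2 * s))) = 1 := by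
    rw [← ENNReal.ofReal_ofNat 2, ← ENNReal.ofReal_mul zero_le_two,
      ← ENNReal.ofReal_mul (by positivity), ← ENNReal.ofReal_one, ← neg_sub (2 * s) 1,
      rpow_neg hε.le]
    congr 1
    field
  have hpotential : ENNReal.ofReal (1 / ε) * ENNReal.ofReal (2 * ε) = 2 := by
    rw [← ENNReal.ofReal_mul (by positivity), ← ENNReal.ofReal_ofNat 2]
    congr 1
    field
  set V := ENNReal.ofReal (2 * R) ^ (n - 1)
  set m := layerMass (volume : Measure (EuclideanSpace ℝ (Fin n))) (n + 2 * s) 1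
  calc _ ≤ ENNReal.ofReal (ε ^ (2 * s - 1) / 2) *
          (Z.card * (V * (2 * (ENNReal.ofReal (ε ^ (1 - 2 * s)) * m))))
        + ENNReal.ofReal (1 / ε) *
          (Z.card * (V * ENNReal.ofReal (2 * ε)) * ENNReal.ofReal M) := by
        rw [← hmass]
        gcongr
        · exact hg.gagliardo_le hε i s
        · exact hg.potentialTerm_le i hW1 hW2 hM
    _ = ENNReal.ofReal (ε ^ (2 * s - 1) / 2) * (2 * ENNReal.ofReal (ε ^ (1 - 2 * s))) *
          (Z.card * (V * m))
        + ENNReal.ofReal (1 / ε) * ENNReal.ofReal (2 * ε) *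
          (Z.card * (V * ENNReal.ofReal M)) := by ring
    _ = _ := by
        rw [hgagliardo, hpotential]
        ring

end Energy

lemma exists_isTransitionLayer_of_mem_Sset {n k : ℕ} (hn : 0 < n) (R : ℝ) :
    ∃ N : ℕ, ∀ ε ∈ Ioo (0 : ℝ) 1, ∀ f ∈ Sset n k hn ε, ∃ (g : ℝ → ℝ) (Z : Finset ℝ),
      f = (fun x => g (x ⟨0, hn⟩)) ∧ Z.card ≤ N ∧ IsTransitionLayer ε Z (Icc (-R) R) g := by
  obtain ⟨N, hN⟩ := exists_card_zeros_cosPoly_le k (-R - 1) (R + 1)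
  refine ⟨N, ?_⟩
  rintro ε ⟨hε0, hε1⟩ f ⟨lam, hlam, hf⟩
  obtain ⟨Z, hcard, hZ⟩ := hN lam (by rintro rfl; simp at hlam)
  exact ⟨signAverage ε (cosPoly k lam), Z, funext hf, hcard,
    isTransitionLayer_signAverage (continuous_cosPoly k lam) hε0 fun t ht =>
      hZ t ⟨by linarith [ht.1], by linarith [ht.2]⟩⟩

theorem energy_bound_on_Sset_large_s_general {n : ℕ} (hn : 0 < n) (s : ℝ)
    (hs : s ∈ Set.Ioo (1 / 2 : ℝ) 1)
    (Ω : Set (EuclideanSpace ℝ (Fin n))) (hΩb : Bornology.IsBounded Ω)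
    (W : ℝ → ℝ) (hW : BddAbove (W '' Icc (-1) 1)) (hW1 : W 1 = 0) (hW2 : W (-1) = 0) (k : ℕ) :
    ∃ c : ℝ, 0 < c ∧ ∀ ε ∈ Set.Ioo (0 : ℝ) 1, ∀ f ∈ Sset n k hn ε,
      ENNReal.ofReal (ε ^ (2 * s - 1) / 2) * gagliardo n s Ω f
          + ENNReal.ofReal (1 / ε) * potentialTerm n Ω W f
        ≤ ENNReal.ofReal c := by
  have : Nonempty (Fin n) := ⟨⟨0, hn⟩⟩
  obtain ⟨R, hΩR⟩ := hΩb.subset_closedBall 0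
  obtain ⟨M, hM⟩ := hW
  obtain ⟨N, hN⟩ := exists_isTransitionLayer_of_mem_Sset (k := k) hn R
  have hmass : layerMass (volume : Measure (EuclideanSpace ℝ (Fin n))) (n + 2 * s) 1 ≠ ∞ := by
    apply layerMass_one_ne_top
    rw [finrank_euclideanSpace_fin]
    exact ⟨by linarith [hs.1], by linarith [hs.2]⟩
  set B : ℝ≥0∞ := N * (ENNReal.ofReal (2 * R) ^ (n - 1) *
    (layerMass (volume : Measure (EuclideanSpace ℝ (Fin n))) (n + 2 * s) 1
      + 2 * ENNReal.ofReal M)) with hB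
  have hB_top : B ≠ ∞ := by finiteness
  refine ⟨B.toReal + 1, by positivity, fun ε hε f hf => ?_⟩
  obtain ⟨g, Z, rfl, hcard, hg⟩ := hN ε hε f hf
  calc _ ≤ _ := add_le_add (mul_le_mul_right (gagliardo_mono s hΩR _) _)
        (mul_le_mul_right (potentialTerm_mono hΩR W _) _)
    _ ≤ _ := hg.energy_le hε.1 ⟨0, hn⟩ s hW1 hW2 fun v hv => hM (mem_image_of_mem W hv)
    _ ≤ B := by
        rw [hB]
        gcongr
    _ ≤ ENNReal.ofReal (B.toReal + 1) :=
        (ENNReal.le_ofReal_iff_toReal_le hB_top (by positivity)).2 (by linarith)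

/-- for `s ∈ (1/2,1)`, a bound on `F_ε` over `S_ε^k`, uniform in `ε ∈ (0,1)`. -/
theorem energy_bound_on_Sset_large_s {n : ℕ} (hn : 0 < n) (s : ℝ)
    (hs : s ∈ Set.Ioo (1 / 2 : ℝ) 1)
    (Ω : Set (EuclideanSpace ℝ (Fin n))) (hΩo : IsOpen Ω) (hΩb : Bornology.IsBounded Ω)
    (W : ℝ → ℝ) (hW : IsDoubleWell W) (k : ℕ) :
    ∃ c : ℝ, 0 < c ∧ ∀ ε ∈ Set.Ioo (0 : ℝ) 1, ∀ f ∈ Sset n k hn ε,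
      ENNReal.ofReal (ε ^ (2 * s - 1) / 2) * gagliardo n s Ω f
          + ENNReal.ofReal (1 / ε) * potentialTerm n Ω W f
        ≤ ENNReal.ofReal c := by
  obtain ⟨hWsmooth, -, -, hW1, hW2, -⟩ := hW
  exact energy_bound_on_Sset_large_s_general hn s hs Ω hΩb W
    (isCompact_Icc.bddAbove_image hWsmooth.continuous.continuousOn) hW1 hW2 k
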